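/- For every natural number N there exists a finite simple connected graph G with v(G) ≥ N such that every vertex of G has degree 2 or 3, v(G) ≠ 5, and λ(G) = v(G)/4. -/

import Mathlib

/-- `H` is a path with `k` edges (a "k-edge path"), as a subgraph of `G`. -/
def SimpleGraph.Subgraph.IsKEdgePath {V : Type*} {G : SimpleGraph V}
    (H : G.Subgraph) (k : ℕ) : Prop :=
  ∃ (u v : V) (w : G.Walk u v), w.IsPath ∧ w.length = k ∧ H = w.toSubgraph

/-- `H` is a tree with `k` edges (a "k-edge tree"), as a subgraph of `G`. -/
def SimpleGraph.Subgraph.IsKEdgeTree {V : Type*} {G : SimpleGraph V}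
    (H : G.Subgraph) (k : ℕ) : Prop :=
  H.coe.IsTree ∧ H.edgeSet.ncard = k

/-- The maximum number of pairwise vertex-disjoint `k`-edge paths in `G`. -/
noncomputable def SimpleGraph.lambdaK {V : Type*} (G : SimpleGraph V) (k : ℕ) : ℕ :=
  sSup {n | ∃ P : Finset G.Subgraph,
    (∀ H ∈ P, H.IsKEdgePath k) ∧
    (P : Set G.Subgraph).Pairwise (fun H H' => Disjoint H.verts H'.verts) ∧
    P.card = n}

/-- The maximum number of pairwise vertex-disjoint `k`-edge trees in `G`. -/
noncomputable def SimpleGraph.tauK {V : Type*} (G : SimpleGraph V) (k : ℕ) : ℕ :=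
  sSup {n | ∃ P : Finset G.Subgraph,
    (∀ H ∈ P, H.IsKEdgeTree k) ∧
    (P : Set G.Subgraph).Pairwise (fun H H' => Disjoint H.verts H'.verts) ∧
    P.card = n}

/-!
Let `H` be a cubic graph and let `G` arise from `H` by subdividing every edge twice. Then
`v(G) = 4 v(H)`. Removing the vertices of `H` from `G` leaves a matching, so every 2-edge path of
`G` meets `V(H)` and `λ(G) ≤ v(H)`. Conversely, each vertex of `H` is the centre of a 2-edge path
whose ends are subdividing vertices next to it, and these paths are disjoint, so `λ(G) = v(H)`.
Prisms over cycles are arbitrarily large connected cubic graphs.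
-/

section PathPacking

open SimpleGraph

variable {V W S : Type*} {G : SimpleGraph V} {G' : SimpleGraph W} {k : ℕ}

/-- A family of pairwise vertex-disjoint `k`-edge paths of `G`. The number `G.lambdaK k` is the
largest size of such a family. -/
def IsPathPacking (G : SimpleGraph V) (k : ℕ) (P : Finset G.Subgraph) : Prop :=
  (∀ H ∈ P, H.IsKEdgePath k) ∧
    (P : Set G.Subgraph).Pairwise fun H H' => Disjoint H.verts H'.verts

theorem IsPathPacking.card_le_card_of_transversal {P : Finset G.Subgraph}
    (hP : IsPathPacking G k P) {C : Finset V}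
    (hC : ∀ H : G.Subgraph, H.IsKEdgePath k → ∃ c ∈ C, c ∈ H.verts) : P.card ≤ C.card := by
  refine Finset.card_le_card_of_forall_subsingleton (fun H c => c ∈ H.verts)
    (fun H hH => hC H (hP.1 H hH)) ?_
  rintro c - H ⟨hH, hcH⟩ H' ⟨hH', hcH'⟩
  exact hP.2.eq hH hH' (Set.not_disjoint_iff.2 ⟨c, hcH, hcH'⟩)

theorem lambdaK_le_card_of_transversal {C : Finset V}
    (hC : ∀ H : G.Subgraph, H.IsKEdgePath k → ∃ c ∈ C, c ∈ H.verts) :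
    G.lambdaK k ≤ C.card := by
  refine csSup_le' ?_
  rintro n ⟨P, hpaths, hdisjoint, rfl⟩
  exact IsPathPacking.card_le_card_of_transversal ⟨hpaths, hdisjoint⟩ hC

theorem IsPathPacking.card_le_lambdaK [Finite V] {P : Finset G.Subgraph}
    (hP : IsPathPacking G k P) : P.card ≤ G.lambdaK k := by
  have := Fintype.ofFinite G.Subgraph
  refine le_csSup ⟨Fintype.card G.Subgraph, ?_⟩ ⟨P, hP.1, hP.2, rfl⟩
  rintro n ⟨Q, -, -, rfl⟩
  exact Q.card_le_univ

theorem verts_nonempty_of_isKEdgePath {H : G.Subgraph} (hH : H.IsKEdgePath k) :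
    H.verts.Nonempty := by
  obtain ⟨u, v, w, -, -, rfl⟩ := hH
  exact ⟨u, w.start_mem_verts_toSubgraph⟩

theorem card_le_lambdaK_of_pairwise_disjoint [Finite V] [Fintype S] {path : S → G.Subgraph}
    (hpath : ∀ s, (path s).IsKEdgePath k)
    (hdisjoint : Pairwise fun s t => Disjoint (path s).verts (path t).verts) :
    Fintype.card S ≤ G.lambdaK k := by
  have path_injective : Function.Injective path := fun s t hst => by
    by_contra hne
    have hself : Disjoint (path s).verts (path s).verts := by
      simpa only [← hst] using hdisjoint hne
    exact (verts_nonempty_of_isKEdgePath (hpath s)).ne_empty (disjoint_self.1 hself)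
  rw [← Finset.card_univ, ← Finset.card_map ⟨path, path_injective⟩]
  refine IsPathPacking.card_le_lambdaK ⟨?_, ?_⟩
  · simpa using hpath
  · rw [Finset.coe_map, Finset.coe_univ, Set.image_univ]
    rintro _ ⟨s, rfl⟩ _ ⟨t, rfl⟩ hne
    exact hdisjoint (ne_of_apply_ne path hne)

theorem isKEdgePath_map {f : G →g G'} (hf : Function.Injective f) {H : G.Subgraph}
    (hH : H.IsKEdgePath k) : (H.map f).IsKEdgePath k := by
  obtain ⟨u, v, w, hw, rfl, rfl⟩ := hH
  exact ⟨f u, f v, w.map f, hw.map hf, w.length_map f, (w.toSubgraph_map f).symm⟩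

theorem lambdaK_le_of_injective [Finite W] {f : G →g G'} (hf : Function.Injective f) :
    G.lambdaK k ≤ G'.lambdaK k := by
  refine csSup_le' ?_
  rintro n ⟨P, hpaths, hdisjoint, rfl⟩
  rw [← Fintype.card_coe]
  refine card_le_lambdaK_of_pairwise_disjoint (path := fun H : P => H.1.map f)
    (fun H => isKEdgePath_map hf (hpaths H H.2)) fun H H' hne => ?_
  exact Set.disjoint_image_of_injective hf (hdisjoint H.2 H'.2 (Subtype.coe_ne_coe.2 hne))

theorem lambdaK_congr [Finite V] [Finite W] (φ : G ≃g G') : G.lambdaK k = G'.lambdaK k :=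
  le_antisymm (lambdaK_le_of_injective (f := φ.toHom) φ.injective)
    (lambdaK_le_of_injective (f := φ.symm.toHom) φ.symm.injective)

theorem verts_toSubgraph_cons_cons_nil {u v w : V} (huv : G.Adj u v) (hvw : G.Adj v w) :
    (Walk.cons huv (Walk.cons hvw Walk.nil)).toSubgraph.verts = {u, v, w} := by
  ext x
  rw [Walk.mem_verts_toSubgraph]
  simp only [Walk.support_cons, Walk.support_nil, List.mem_cons, List.not_mem_nil, or_false,
    Set.mem_insert_iff, Set.mem_singleton_iff]

theorem exists_isKEdgePath_two_iff {s : Set V} :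
    (∃ H : G.Subgraph, H.IsKEdgePath 2 ∧ H.verts = s) ↔
      ∃ u v w, G.Adj u v ∧ G.Adj v w ∧ u ≠ w ∧ s = {u, v, w} := by
  constructor
  · rintro ⟨_, ⟨u, w, p, hp, hlen, rfl⟩, rfl⟩
    match p, hp, hlen with
    | .cons (v := v) huv (.cons hvw .nil), hp, _ =>
      refine ⟨u, v, w, huv, hvw, ?_, ?_⟩
      · rintro rfl
        simp at hp
      · exact verts_toSubgraph_cons_cons_nil huv hvw
  · rintro ⟨u, v, w, huv, hvw, huw, rfl⟩
    refine ⟨_, ⟨u, w, .cons huv (.cons hvw .nil), ?_, rfl, rfl⟩,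
      verts_toSubgraph_cons_cons_nil huv hvw⟩
    simp [Walk.cons_isPath_iff, huv.ne, hvw.ne, huw]

end PathPacking

/-- The graph obtained from `H` by subdividing every edge twice. The two vertices subdividing an
edge are its two darts, each adjacent to its source and to its reverse. -/
def doubleSubdivision {V : Type*} (H : SimpleGraph V) : SimpleGraph (V ⊕ H.Dart) where
  Adj
    | .inl v, .inr d => d.fst = v
    | .inr d, .inl v => d.fst = v
    | .inr d, .inr e => e = d.symm
    | .inl _, .inl _ => False
  symm := ⟨by
    rintro (u | d) (v | e) h
    exacts [h, h, h, h ▸ (d.symm_symm).symm]⟩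
  loopless := ⟨by
    rintro (v | d) h
    exacts [h, d.symm_ne h.symm]⟩

namespace doubleSubdivision

open SimpleGraph

variable {V : Type*} {H : SimpleGraph V}

theorem adj_inl_inr {v : V} {d : H.Dart} :
    (doubleSubdivision H).Adj (.inl v) (.inr d) ↔ d.fst = v := Iff.rfl

theorem adj_inr_inl {v : V} {d : H.Dart} :
    (doubleSubdivision H).Adj (.inr d) (.inl v) ↔ d.fst = v := Iff.rfl

theorem adj_inr_inr {d e : H.Dart} :
    (doubleSubdivision H).Adj (.inr d) (.inr e) ↔ e = d.symm := Iff.rfl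

theorem not_adj_inl_inl {u v : V} : ¬ (doubleSubdivision H).Adj (.inl u) (.inl v) := id

theorem card_of_isRegularOfDegree [Fintype V] [DecidableRel H.Adj] {r : ℕ}
    (hH : H.IsRegularOfDegree r) :
    Fintype.card (V ⊕ H.Dart) = (r + 1) * Fintype.card V := by
  classical
  simp only [Fintype.card_sum, H.dart_card_eq_sum_degrees, hH.degree_eq, Finset.sum_const,
    Finset.card_univ, smul_eq_mul]
  ring

theorem ncard_neighborSet_inl (v : V) :
    ((doubleSubdivision H).neighborSet (.inl v)).ncard = (H.neighborSet v).ncard := by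
  have neighborSet_eq : (doubleSubdivision H).neighborSet (.inl v) =
      Set.range (Sum.inr ∘ H.dartOfNeighborSet v) := by
    ext (u | d)
    · simp [not_adj_inl_inl]
    · suffices d.fst = v ↔ ∃ w, H.dartOfNeighborSet v w = d by simpa [adj_inl_inr]
      constructor
      · rintro rfl
        exact ⟨⟨d.snd, d.adj⟩, rfl⟩
      · rintro ⟨w, rfl⟩
        rfl
  rw [neighborSet_eq, Set.ncard_range_of_injective
    (Sum.inr_injective.comp (H.dartOfNeighborSet_injective v)), Nat.card_coe_set_eq]

theorem ncard_neighborSet_inr (d : H.Dart) :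
    ((doubleSubdivision H).neighborSet (.inr d)).ncard = 2 := by
  have neighborSet_eq : (doubleSubdivision H).neighborSet (.inr d) =
      {.inl d.fst, .inr d.symm} := by
    ext (v | e) <;> simp [adj_inr_inl, adj_inr_inr, eq_comm]
  rw [neighborSet_eq, Set.ncard_pair Sum.inl_ne_inr]

theorem reachable_inl_of_adj {u v : V} (huv : H.Adj u v) :
    (doubleSubdivision H).Reachable (.inl u) (.inl v) := by
  let d : H.Dart := ⟨(u, v), huv⟩
  have source : (doubleSubdivision H).Adj (.inl u) (.inr d) := adj_inl_inr.2 rfl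
  have middle : (doubleSubdivision H).Adj (.inr d) (.inr d.symm) := adj_inr_inr.2 rfl
  have target : (doubleSubdivision H).Adj (.inr d.symm) (.inl v) := adj_inr_inl.2 rfl
  exact source.reachable.trans (middle.reachable.trans target.reachable)

theorem reachable_inl {u v : V} (huv : H.Reachable u v) :
    (doubleSubdivision H).Reachable (.inl u) (.inl v) := by
  obtain ⟨p⟩ := huv
  induction p with
  | nil => rfl
  | cons h _ ih => exact (reachable_inl_of_adj h).trans ih

theorem connected (hH : H.Connected) : (doubleSubdivision H).Connected := by
  obtain ⟨v₀⟩ := hH.nonempty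
  refine (connected_iff_exists_forall_reachable _).2 ⟨.inl v₀, ?_⟩
  rintro (v | d)
  · exact reachable_inl (hH v₀ v)
  · have last : (doubleSubdivision H).Adj (.inl d.fst) (.inr d) := adj_inl_inr.2 rfl
    exact (reachable_inl (hH v₀ d.fst)).trans last.reachable

theorem exists_inl_mem_verts_of_isKEdgePath_two {K : (doubleSubdivision H).Subgraph}
    (hK : K.IsKEdgePath 2) : ∃ v : V, .inl v ∈ K.verts := by
  obtain ⟨x, y, z, hxy, hyz, hxz, hverts⟩ := exists_isKEdgePath_two_iff.1 ⟨K, hK, rfl⟩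
  rw [hverts]
  rcases x, y, z with ⟨u | c, v | d, w | e⟩
  case inr.inr.inr =>
    -- A subdividing vertex has only one neighbour of its own kind.
    have hc : c = d.symm := adj_inr_inr.1 hxy.symm
    have he : e = d.symm := adj_inr_inr.1 hyz
    exact absurd (congrArg Sum.inr (hc.trans he.symm)) hxz
  all_goals simp

theorem exists_isKEdgePath_two_centered {v : V} (hv : (H.neighborSet v).Nontrivial) :
    ∃ K : (doubleSubdivision H).Subgraph, K.IsKEdgePath 2 ∧
      ∀ x ∈ K.verts, Sum.elim id (fun d : H.Dart => d.fst) x = v := by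
  obtain ⟨a, ha, b, hb, hab⟩ := hv
  let d : H.Dart := ⟨(v, a), ha⟩
  let e : H.Dart := ⟨(v, b), hb⟩
  have hde : (Sum.inr d : V ⊕ H.Dart) ≠ .inr e := fun h =>
    hab (congrArg (fun c : H.Dart => c.snd) (Sum.inr_injective h))
  obtain ⟨K, hK, hverts⟩ := exists_isKEdgePath_two_iff.2
    ⟨Sum.inr d, Sum.inl v, Sum.inr e, adj_inr_inl.2 rfl, adj_inl_inr.2 rfl, hde, rfl⟩
  refine ⟨K, hK, ?_⟩
  rw [hverts]
  rintro x (rfl | rfl | rfl) <;> rfl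

theorem lambdaK_two [Fintype V] (hH : ∀ v, (H.neighborSet v).Nontrivial) :
    (doubleSubdivision H).lambdaK 2 = Fintype.card V := by
  apply le_antisymm
  · rw [← Finset.card_univ, ← Finset.card_map (Function.Embedding.inl (β := H.Dart))]
    refine lambdaK_le_card_of_transversal fun K hK => ?_
    simpa using exists_inl_mem_verts_of_isKEdgePath_two hK
  · have : Finite H.Dart := .of_injective _ Dart.toProd_injective
    choose path hpath hcenter using fun v => exists_isKEdgePath_two_centered (hH v)
    refine card_le_lambdaK_of_pairwise_disjoint hpath fun u v huv => ?_
    exact Set.disjoint_left.2 fun x hxu hxv => huv ((hcenter u x hxu).symm.trans (hcenter v x hxv))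

end doubleSubdivision

theorem exists_lambdaK_two_eq_card_of_cubic {V : Type*} [Fintype V] {H : SimpleGraph V}
    (hconnected : H.Connected) (hcubic : ∀ v, (H.neighborSet v).ncard = 3) :
    ∃ G : SimpleGraph (Fin (4 * Fintype.card V)), G.Connected ∧
      (∀ v, (G.neighborSet v).ncard = 2 ∨ (G.neighborSet v).ncard = 3) ∧
      G.lambdaK 2 = Fintype.card V := by
  classical
  have hregular : H.IsRegularOfDegree 3 := fun v =>
    (Set.ncard_eq_toFinset_card' (H.neighborSet v)).symm.trans (hcubic v)
  have hcard : Fintype.card (V ⊕ H.Dart) = 4 * Fintype.card V :=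
    doubleSubdivision.card_of_isRegularOfDegree hregular
  let φ := (doubleSubdivision H).overFinIso hcard
  refine ⟨_, φ.connected_iff.1 (doubleSubdivision.connected hconnected), fun v => ?_, ?_⟩
  · obtain ⟨x, rfl⟩ := φ.surjective v
    rw [← Nat.card_coe_set_eq, ← Nat.card_congr (φ.mapNeighborSet x), Nat.card_coe_set_eq]
    rcases x with v | d
    · exact .inr ((doubleSubdivision.ncard_neighborSet_inl v).trans (hcubic v))
    · exact .inl (doubleSubdivision.ncard_neighborSet_inr d)
  · rw [← lambdaK_congr φ]
    refine doubleSubdivision.lambdaK_two fun v => Set.one_lt_ncard_iff_nontrivial.1 ?_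
    rw [hcubic v]
    norm_num

section Prism

open SimpleGraph

/-- The prism over a cycle with `n` vertices, a cubic graph for `n ≥ 3`. -/
abbrev prism (n : ℕ) : SimpleGraph (Fin n × Bool) := cycleGraph n □ ⊤

theorem prism_connected (n : ℕ) : (prism (n + 1)).Connected :=
  cycleGraph_connected.boxProd connected_top

theorem ncard_neighborSet_prism (n : ℕ) (x : Fin (n + 3) × Bool) :
    ((prism (n + 3)).neighborSet x).ncard = 3 := by
  rw [Set.ncard_eq_toFinset_card', ← neighborFinset_def, card_neighborFinset_eq_degree,
    degree_boxProd, cycleGraph_degree_three_le, complete_graph_degree, Fintype.card_bool]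

end Prism

/-- For every `N` there exists a finite simple connected graph `G` with
`v(G) ≥ N`, every vertex of degree 2 or 3, `v(G) ≠ 5`, and `λ(G) = v(G)/4`. -/
theorem stmt_15 (N : ℕ) :
    ∃ (n : ℕ) (G : SimpleGraph (Fin n)),
      N ≤ n ∧ G.Connected ∧
      (∀ v : Fin n, (G.neighborSet v).ncard = 2 ∨ (G.neighborSet v).ncard = 3) ∧
      n ≠ 5 ∧
      (G.lambdaK 2 : ℚ) = (n : ℚ) / 4 := by
  obtain ⟨G, hconnected, hdegree, hlambda⟩ :=
    exists_lambdaK_two_eq_card_of_cubic (H := prism (N + 3)) (prism_connected (N + 2))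
      (ncard_neighborSet_prism N)
  have hcard : Fintype.card (Fin (N + 3) × Bool) = (N + 3) * 2 := by simp
  refine ⟨_, G, by omega, hconnected, hdegree, by omega, ?_⟩
  rw [hlambda]
  push_cast
  ring
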